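/- Let f be a continuous real-valued function on [-1,1] that is not identically zero, let β > 0, and let (n_j) be a strictly increasing sequence of positive integers with lim_{j→∞} n_{j+1}/n_j = +∞ such that E_{n_j}(f) ≤ e^{-β n_j} for every j. Assume moreover that 0 < m_f(E*_{n_j}(f)) < 1 for every j. Then lim_{j→∞} |log m_f(E*_{n_{j+1}}(f))| / |log m_f(E*_{n_j}(f))| = +∞. -/

import Mathlib

open Filter MeasureTheory Set

/-- Best uniform approximation error by polynomials of degree ≤ n on [-1,1]. -/
noncomputable def En (f : ℝ → ℝ) (n : ℕ) : ℝ :=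
  sInf ((fun P : Polynomial ℝ => sSup ((fun x => |f x - P.eval x|) '' Set.Icc (-1:ℝ) 1)) ''
    {P : Polynomial ℝ | P.natDegree ≤ n})

/-- E*_n(f) = max(E_n(f), e^{-n}). -/
noncomputable def Estar (f : ℝ → ℝ) (n : ℕ) : ℝ := max (En f n) (Real.exp (-(n : ℝ)))

/-- m_f(t): the Lebesgue measure of {x ∈ [-1,1] : |f x| ≤ t}. -/
noncomputable def mf (f : ℝ → ℝ) (t : ℝ) : ℝ :=
  (volume {x : ℝ | x ∈ Set.Icc (-1:ℝ) 1 ∧ |f x| ≤ t}).toReal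

open scoped Topology

/-!
The engine is a Remez inequality on a short interval `J` of length `ℓ`. There a polynomial of degree
`N` bounded on `[-1, 1]` behaves like one of degree `ε N`: Lagrange interpolation at `≈ ε N`
separated nodes of a set of density `exp (-Λ)` in `J` costs only `exp (2 Λ ε N)`, and by Markov's
inequality for higher derivatives the remainder is at most `exp (-ρ ε N)` once `ℓ` is below a
multiple of `ε² exp (-ρ)`. Hence, if `E_N(f) ≤ exp (-b N)` and `|f| ≤ exp (-b N)` on such a dense
subset of `J`, then `|f|` is exponentially small in `N` on all of `J`.

Let `m = exp (-L)` be the measure of the level set attached to `n_j`. Some interval of length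
between `2 m` and `4 m` is filled by the level set attached to `N = n_{j+1}` with at least half its
mean density. Were the measure of the latter larger than `exp (-A L)`, the inequality with
`Λ ≈ A L` and `ε ≈ b / Λ` would give `|f| ≤ exp (-n_j)` on an interval longer than `m`, which is
absurd.

That `m → 0` needs the zero set `Z` of `f` to be null. By the same inequality, a short interval in
which `Z` has density at least `s` lies in `Z`. If `Z` were not null, sliding such an interval
across `[-1, 1]`, where the density of `Z` varies continuously, would show `f = 0`.
-/

section Polynomials

open Polynomial

theorem iterate_derivative_comp_linear {R : Type*} [CommSemiring R] (p : R[X]) (a b : R) (k : ℕ) :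
    derivative^[k] (p.comp (C a * X + C b)) =
      C (a ^ k) * (derivative^[k] p).comp (C a * X + C b) := by
  induction k with
  | zero => simp
  | succ k ih =>
    rw [Function.iterate_succ_apply', ih, Function.iterate_succ_apply', derivative_C_mul,
      derivative_comp]
    simp only [derivative_add, derivative_C_mul, derivative_X, derivative_C, pow_succ, C_mul]
    ring

theorem eval_one_iterate_derivative_chebyshev_T_le (N k : ℕ) :
    (derivative^[k] (Chebyshev.T ℝ N)).eval 1 ≤ ((N : ℝ) ^ 2) ^ k / k.factorial := by
  rcases lt_or_ge N k with hk | hk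
  · rw [iterate_derivative_eq_zero_of_degree_lt (by simp [hk]), eval_zero]
    positivity
  have numerator_le : ∏ l ∈ Finset.range k, ((N : ℝ) ^ 2 - (l : ℝ) ^ 2) ≤ ((N : ℝ) ^ 2) ^ k := by
    rw [← Finset.card_range k, ← Finset.prod_const, Finset.card_range]
    refine Finset.prod_le_prod (fun l hl ↦ sub_nonneg.2 ?_) fun l _ ↦ sub_le_self _ (sq_nonneg _)
    have : l ≤ N := (Finset.mem_range.1 hl).le.trans hk
    gcongr
  have factorial_le : (k.factorial : ℝ) ≤ ∏ l ∈ Finset.range k, (2 * (l : ℝ) + 1) := by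
    rw [← Finset.prod_range_add_one_eq_factorial]
    push_cast
    gcongr with l
    linarith [(l.cast_nonneg : (0 : ℝ) ≤ l)]
  rw [Chebyshev.iterate_derivative_T_eval_one_eq_div]
  push_cast
  gcongr

theorem abs_eval_one_iterate_derivative_le {P : ℝ[X]} {N : ℕ} {M : ℝ} (hM : 0 < M)
    (hdeg : P.natDegree ≤ N) (hP : ∀ x ∈ Icc (-1 : ℝ) 1, |P.eval x| ≤ M) (k : ℕ) :
    |(derivative^[k] P).eval 1| ≤ M * (((N : ℝ) ^ 2) ^ k / k.factorial) := by
  have signed {c : ℝ} (hc : |c| = M⁻¹) :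
      c * (derivative^[k] P).eval 1 ≤ ((N : ℝ) ^ 2) ^ k / k.factorial := by
    have hdeg' : (C c * P).degree ≤ N :=
      degree_le_of_natDegree_le ((natDegree_C_mul_le _ _).trans hdeg)
    have hbound : ∀ x ∈ Icc (-1 : ℝ) 1, |(C c * P).eval x| ≤ 1 := fun x hx ↦ by
      rw [eval_C_mul, abs_mul, hc, inv_mul_le_one₀ hM]
      exact hP x hx
    simpa [iterate_derivative_C_mul] using
      (Chebyshev.eval_iterate_derivative_le_of_forall_abs_le_one (k := k) le_rfl hdeg'
        hbound).trans (eval_one_iterate_derivative_chebyshev_T_le N k)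
  have hpos := signed (abs_of_pos (inv_pos.2 hM))
  have hneg := signed (c := -M⁻¹) (by rw [abs_neg, abs_of_pos (inv_pos.2 hM)])
  rw [← inv_mul_le_iff₀ hM, ← abs_of_pos (inv_pos.2 hM), ← abs_mul, abs_le]
  exact ⟨by linarith, hpos⟩

theorem exists_affine_mapsTo_Icc {x : ℝ} (hx : x ∈ Icc (-1 : ℝ) 1) :
    ∃ a b : ℝ, a + b = x ∧ 1 / 2 ≤ |a| ∧
      MapsTo (fun y ↦ a * y + b) (Icc (-1) 1) (Icc (-1) 1) := by
  obtain ⟨hx₁, hx₂⟩ := hx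
  rcases le_total 0 x with h | h
  · refine ⟨(1 + x) / 2, (x - 1) / 2, by ring, ?_, fun y hy ↦ ?_⟩
    · rw [abs_of_nonneg (by linarith)]; linarith
    · constructor <;> nlinarith [hy.1, hy.2]
  · refine ⟨(x - 1) / 2, (1 + x) / 2, by ring, ?_, fun y hy ↦ ?_⟩
    · rw [abs_of_nonpos (by linarith)]; linarith
    · constructor <;> nlinarith [hy.1, hy.2]

-- Up to the factor `2 ^ k`, every point of `[-1, 1]` is as good as an endpoint: it is the image of
-- `1` under an affine self-map of `[-1, 1]` of slope at least `1 / 2` in absolute value.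
theorem abs_eval_iterate_derivative_le {P : ℝ[X]} {N : ℕ} {M : ℝ} (hM : 0 < M)
    (hdeg : P.natDegree ≤ N) (hP : ∀ x ∈ Icc (-1 : ℝ) 1, |P.eval x| ≤ M) (k : ℕ)
    {x : ℝ} (hx : x ∈ Icc (-1 : ℝ) 1) :
    |(derivative^[k] P).eval x| ≤ M * ((2 * (N : ℝ) ^ 2) ^ k / k.factorial) := by
  obtain ⟨a, b, rfl, ha, hmaps⟩ := exists_affine_mapsTo_Icc hx
  have hdeg' : (P.comp (C a * X + C b)).natDegree ≤ N :=
    natDegree_comp_le.trans ((Nat.mul_le_mul hdeg natDegree_linear_le).trans_eq (mul_one N))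
  have hcomp := abs_eval_one_iterate_derivative_le hM hdeg'
    (fun y hy ↦ by simpa using hP _ (hmaps hy)) k
  rw [iterate_derivative_comp_linear] at hcomp
  simp only [eval_mul, eval_C, eval_comp, eval_add, eval_X, mul_one, abs_mul, abs_pow] at hcomp
  calc |(derivative^[k] P).eval (a + b)|
      = 2 ^ k * ((1 / 2) ^ k * |(derivative^[k] P).eval (a + b)|) := by
        rw [← mul_assoc, ← mul_pow]; norm_num
    _ ≤ 2 ^ k * (|a| ^ k * |(derivative^[k] P).eval (a + b)|) := by gcongr
    _ ≤ 2 ^ k * (M * (((N : ℝ) ^ 2) ^ k / k.factorial)) := by gcongr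
    _ = M * ((2 * (N : ℝ) ^ 2) ^ k / k.factorial) := by rw [mul_pow]; ring

theorem exists_iterate_derivative_eval_eq_zero {I : Set ℝ} [I.OrdConnected] {k : ℕ} {p : ℝ[X]}
    {S : Finset ℝ} (hcard : k < S.card) (hSI : (S : Set ℝ) ⊆ I) (hS : ∀ x ∈ S, p.eval x = 0) :
    ∃ ξ ∈ I, (derivative^[k] p).eval ξ = 0 := by
  classical
  induction k generalizing p S with
  | zero =>
    obtain ⟨x, hx⟩ := Finset.card_pos.1 hcard
    exact ⟨x, hSI hx, hS x hx⟩
  | succ k ih =>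
    simp only [Function.iterate_succ_apply]
    by_cases hp : derivative p = 0
    · obtain ⟨x, hx⟩ := Finset.card_pos.1 (k.succ_pos.trans hcard)
      exact ⟨x, hSI hx, by simp [hp]⟩
    have interleaved : S.card ≤ ((derivative p).roots.toFinset.filter (· ∈ I) \ S).card + 1 := by
      refine Finset.card_le_sdiff_of_interleaved fun x hx y hy hxy _ ↦ ?_
      obtain ⟨z, hz, hz₀⟩ := exists_hasDerivAt_eq_zero hxy p.continuousOn
        ((hS x hx).trans (hS y hy).symm) fun z _ ↦ p.hasDerivAt z
      have hzI : z ∈ I := Set.OrdConnected.out ‹_› (hSI hx) (hSI hy) (Ioo_subset_Icc_self hz)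
      exact ⟨z, by simpa [hp, hzI] using hz₀, hz⟩
    refine ih (S := (derivative p).roots.toFinset.filter (· ∈ I) \ S) (by omega) ?_ ?_
    · intro z hz
      simp_all
    · intro z hz
      simp_all

theorem iterate_derivative_natDegree_of_monic {R : Type*} [CommRing R] {p : R[X]} (hp : p.Monic) :
    derivative^[p.natDegree] p = C (p.natDegree.factorial : R) := by
  have hdeg : (derivative^[p.natDegree] p).natDegree ≤ 0 := by
    simpa using natDegree_iterate_derivative p p.natDegree
  rw [eq_C_of_natDegree_le_zero hdeg, coeff_iterate_derivative]
  simp [hp.coeff_natDegree, Nat.descFactorial_self]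

theorem exists_eval_sub_eval_interpolate_eq {ι : Type*} [DecidableEq ι] {s : Finset ι} {v : ι → ℝ}
    (hv : InjOn v s) {I : Set ℝ} [I.OrdConnected] (hvI : MapsTo v s I) (P : ℝ[X]) {x : ℝ}
    (hx : x ∈ I) :
    ∃ ξ ∈ I, P.eval x - (Lagrange.interpolate s v fun i ↦ P.eval (v i)).eval x =
      (derivative^[s.card] P).eval ξ / s.card.factorial * ∏ i ∈ s, (x - v i) := by
  set Q := Lagrange.interpolate s v fun i ↦ P.eval (v i)
  have hQ : ∀ i ∈ s, Q.eval (v i) = P.eval (v i) := fun i ↦ Lagrange.eval_interpolate_at_node _ hv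
  by_cases hxv : ∃ i ∈ s, v i = x
  · obtain ⟨i, hi, rfl⟩ := hxv
    exact ⟨v i, hx, by rw [hQ i hi, Finset.prod_eq_zero hi (sub_self _)]; simp⟩
  push Not at hxv
  have hW : (Lagrange.nodal s v).eval x ≠ 0 :=
    Lagrange.eval_nodal_not_at_node fun i hi ↦ (hxv i hi).symm
  set q : ℝ := (P.eval x - Q.eval x) / (Lagrange.nodal s v).eval x
  obtain ⟨ξ, hξ, hξ₀⟩ := exists_iterate_derivative_eval_eq_zero (I := I) (k := s.card)
    (p := P - Q - C q * Lagrange.nodal s v) (S := insert x (s.image v))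
    (by
      rw [Finset.card_insert_of_notMem (by simpa using hxv), Finset.card_image_of_injOn hv]
      exact Nat.lt_succ_self _)
    (by
      rw [Finset.coe_insert, Finset.coe_image]
      exact insert_subset hx hvI.image_subset)
    (by
      simp only [Finset.forall_mem_insert, Finset.forall_mem_image, eval_sub, eval_mul, eval_C]
      refine ⟨by rw [div_mul_cancel₀ _ hW, sub_self], fun i hi ↦ ?_⟩
      rw [hQ i hi, Lagrange.eval_nodal_at_node hi]
      ring)
  have hQ₀ : derivative^[s.card] Q = 0 :=
    iterate_derivative_eq_zero_of_degree_lt (Lagrange.degree_interpolate_lt _ hv)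
  have hnodal : derivative^[s.card] (Lagrange.nodal s v) = C (s.card.factorial : ℝ) := by
    simpa only [Lagrange.natDegree_nodal] using
      iterate_derivative_natDegree_of_monic (Lagrange.nodal_monic (s := s) (v := v))
  simp only [iterate_derivative_sub, iterate_derivative_C_mul, hQ₀, hnodal, eval_sub, eval_mul,
    eval_C, sub_zero, sub_eq_zero] at hξ₀
  refine ⟨ξ, hξ, ?_⟩
  rw [hξ₀, mul_div_cancel_right₀ _ (by positivity), ← Lagrange.eval_nodal, div_mul_cancel₀ _ hW]

end Polynomials

section SeparatedNodes

theorem exists_separated_nodes {E : Set ℝ} (hE : IsCompact E) {d : ℝ} (hd : 0 ≤ d) {k : ℕ}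
    (hk : k * d < volume.real E) :
    ∃ y : ℕ → ℝ, (∀ i ≤ k, y i ∈ E) ∧ Monotone fun i ↦ y i - i * d := by
  induction k generalizing E with
  | zero =>
    obtain ⟨x, hx⟩ : E.Nonempty :=
      nonempty_of_measureReal_ne_zero (lt_of_le_of_lt (by positivity) hk).ne'
    refine ⟨fun i ↦ x + i * d, fun i hi ↦ ?_, fun i j _ ↦ by simp⟩
    simpa [Nat.le_zero.1 hi] using hx
  | succ k ih =>
    -- The leftmost point of `E` is the first node; the others lie at distance `≥ d` from it.
    set y₀ := sInf E
    set E' := E ∩ Ici (y₀ + d)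
    have hE' : IsCompact E' := hE.inter_right isClosed_Ici
    have hcover : E ⊆ Icc y₀ (y₀ + d) ∪ E' := fun x hx ↦
      (le_total x (y₀ + d)).imp (⟨csInf_le hE.bddBelow hx, ·⟩) (⟨hx, ·⟩)
    have hvol : volume.real E ≤ d + volume.real E' := by
      calc volume.real E ≤ volume.real (Icc y₀ (y₀ + d) ∪ E') :=
            measureReal_mono hcover (isCompact_Icc.union hE').measure_lt_top.ne
        _ ≤ volume.real (Icc y₀ (y₀ + d)) + volume.real E' := measureReal_union_le _ _
        _ = d + volume.real E' := by simp [hd]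
    have hne : E.Nonempty :=
      nonempty_of_measureReal_ne_zero (lt_of_le_of_lt (by positivity) hk).ne'
    push_cast at hk
    have hk' : k * d < volume.real E' := by linarith
    obtain ⟨y, hyE, hy⟩ := ih hE' hk'
    refine ⟨fun i ↦ i.casesOn y₀ y, ?_, monotone_nat_of_le_succ ?_⟩
    · rintro (_ | i) hi
      · exact hE.sInf_mem hne
      · exact (hyE i (by omega)).1
    · rintro (_ | i)
      · have : y₀ + d ≤ y 0 := (hyE 0 k.zero_le).2
        simpa using by linarith
      · have := hy i.le_succ
        push_cast at this ⊢
        linarith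

variable {y : ℕ → ℝ} {d : ℝ}

theorem mul_abs_sub_le_abs_sub (hy : Monotone fun i ↦ y i - i * d) (i j : ℕ) :
    |(i : ℝ) - j| * d ≤ |y i - y j| := by
  wlog hij : j ≤ i generalizing i j
  · rw [abs_sub_comm, abs_sub_comm (y i)]
    exact this j i (le_of_not_ge hij)
  have := hy hij
  rw [abs_of_nonneg (sub_nonneg.2 (Nat.cast_le.2 hij))]
  exact le_trans (by linarith) (le_abs_self _)

theorem injective_of_monotone_sub_mul (hd : 0 < d) (hy : Monotone fun i ↦ y i - i * d) :
    y.Injective := by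
  intro i j hij
  have h := mul_abs_sub_le_abs_sub hy i j
  rw [hij, sub_self, abs_zero] at h
  have h₀ : |(i : ℝ) - j| = 0 := le_antisymm (nonpos_of_mul_nonpos_left h hd) (abs_nonneg _)
  exact_mod_cast sub_eq_zero.1 (abs_eq_zero.1 h₀)

theorem prod_range_abs_sub (i : ℕ) : ∏ j ∈ Finset.range i, |(i : ℝ) - j| = i.factorial := by
  rw [← Finset.prod_range_reflect, ← Finset.prod_range_add_one_eq_factorial, Nat.cast_prod]
  refine Finset.prod_congr rfl fun j hj ↦ ?_
  have hj : j + 1 ≤ i := Finset.mem_range.1 hj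
  rw [show i - 1 - j = i - (j + 1) by omega, Nat.cast_sub hj, sub_sub_cancel, Nat.abs_cast]

theorem prod_erase_range_abs_sub (i m : ℕ) :
    ∏ j ∈ (Finset.range (i + m + 1)).erase i, |(i : ℝ) - j| = i.factorial * m.factorial := by
  induction m with
  | zero =>
    rw [add_zero, Finset.range_add_one, Finset.erase_insert (by simp), prod_range_abs_sub]
    simp
  | succ m ih =>
    rw [← add_assoc, Finset.range_add_one, Finset.erase_insert_of_ne (by omega),
      Finset.prod_insert (by simp), ih, Nat.factorial_succ, abs_sub_comm]
    have : ((i + m + 1 : ℕ) : ℝ) - i = (m + 1 : ℕ) := by push_cast; ring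
    rw [this, Nat.abs_cast, Nat.cast_mul]
    ring

variable {k : ℕ} {x ℓ : ℝ}

theorem abs_eval_lagrange_basis_le (hd : 0 < d) (hy : Monotone fun i ↦ y i - i * d)
    (hx : ∀ i ≤ k, |x - y i| ≤ ℓ) {i : ℕ} (hi : i ≤ k) :
    |(Lagrange.basis (Finset.range (k + 1)) y i).eval x| ≤
      (ℓ / d) ^ k * ((k.choose i : ℝ) / k.factorial) := by
  have factor_le : ∀ j ∈ (Finset.range (k + 1)).erase i,
      |(Lagrange.basisDivisor (y i) (y j)).eval x| ≤ ℓ / d * |(i : ℝ) - j|⁻¹ := fun j hj ↦ by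
    obtain ⟨hji, hj⟩ := Finset.mem_erase.1 hj
    have hij : 0 < |(i : ℝ) - j| := abs_pos.2 (sub_ne_zero.2 (Nat.cast_injective.ne hji.symm))
    have hℓ := hx j (Finset.mem_range_succ_iff.1 hj)
    simp only [Lagrange.basisDivisor, Polynomial.eval_mul, Polynomial.eval_C, Polynomial.eval_sub,
      Polynomial.eval_X, abs_mul, abs_inv]
    calc |y i - y j|⁻¹ * |x - y j| ≤ (|(i : ℝ) - j| * d)⁻¹ * ℓ := by
          gcongr
          exact mul_abs_sub_le_abs_sub hy i j
      _ = ℓ / d * |(i : ℝ) - j|⁻¹ := by field_simp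
  obtain ⟨m, rfl⟩ := Nat.exists_eq_add_of_le hi
  calc |(Lagrange.basis (Finset.range (i + m + 1)) y i).eval x|
      ≤ ∏ j ∈ (Finset.range (i + m + 1)).erase i, (ℓ / d * |(i : ℝ) - j|⁻¹) := by
        rw [Lagrange.basis, Polynomial.eval_prod, Finset.abs_prod]
        exact Finset.prod_le_prod (fun _ _ ↦ abs_nonneg _) factor_le
    _ = (ℓ / d) ^ (i + m) * (i.factorial * m.factorial : ℝ)⁻¹ := by
        rw [Finset.prod_mul_distrib, Finset.prod_const, Finset.prod_inv_distrib,
          prod_erase_range_abs_sub, Finset.card_erase_of_mem (by simp), Finset.card_range,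
          Nat.add_sub_cancel]
    _ = (ℓ / d) ^ (i + m) * (((i + m).choose i : ℝ) / (i + m).factorial) := by
        rw [Nat.cast_add_choose]
        field_simp

theorem abs_eval_interpolate_le (hd : 0 < d) (hy : Monotone fun i ↦ y i - i * d)
    (hx : ∀ i ≤ k, |x - y i| ≤ ℓ) {r : ℕ → ℝ} {τ : ℝ} (hr : ∀ i ≤ k, |r i| ≤ τ) :
    |(Lagrange.interpolate (Finset.range (k + 1)) y r).eval x| ≤
      τ * ((2 * (ℓ / d)) ^ k / k.factorial) := by
  have hτ : 0 ≤ τ := (abs_nonneg _).trans (hr 0 k.zero_le)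
  rw [Lagrange.interpolate_apply, Polynomial.eval_finsetSum]
  calc |∑ i ∈ Finset.range (k + 1),
          (Polynomial.C (r i) * Lagrange.basis (Finset.range (k + 1)) y i).eval x|
      ≤ ∑ i ∈ Finset.range (k + 1),
          |(Polynomial.C (r i) * Lagrange.basis (Finset.range (k + 1)) y i).eval x| :=
        Finset.abs_sum_le_sum_abs _ _
    _ ≤ ∑ i ∈ Finset.range (k + 1), τ * ((ℓ / d) ^ k * ((k.choose i : ℝ) / k.factorial)) := by
        refine Finset.sum_le_sum fun i hi ↦ ?_
        have hi := Finset.mem_range_succ_iff.1 hi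
        rw [Polynomial.eval_C_mul, abs_mul]
        exact mul_le_mul (hr i hi) (abs_eval_lagrange_basis_le hd hy hx hi) (abs_nonneg _) hτ
    _ = τ * ((2 * (ℓ / d)) ^ k / k.factorial) := by
        rw [← Finset.mul_sum, ← Finset.mul_sum, ← Finset.sum_div, ← Nat.cast_sum,
          Nat.sum_range_choose, mul_pow]
        push_cast
        ring

end SeparatedNodes

section LocalRemez

theorem abs_eval_le_of_mul_le_volume {P : Polynomial ℝ} {N : ℕ} {M : ℝ} (hM : 0 < M)
    (hdeg : P.natDegree ≤ N) (hP : ∀ x ∈ Icc (-1 : ℝ) 1, |P.eval x| ≤ M) {a ℓ : ℝ} (hℓ : 0 < ℓ)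
    (hJ : Icc a (a + ℓ) ⊆ Icc (-1) 1) {E : Set ℝ} (hE : IsCompact E) (hEJ : E ⊆ Icc a (a + ℓ))
    {s : ℝ} (hs : 0 < s) (hsE : s * ℓ ≤ volume.real E) {τ : ℝ} (hτ : ∀ x ∈ E, |P.eval x| ≤ τ)
    (k : ℕ) {x : ℝ} (hx : x ∈ Icc a (a + ℓ)) :
    |P.eval x| ≤ τ * ((2 * ((k + 1 : ℕ) / s)) ^ k / k.factorial) +
      M * ((2 * (N : ℝ) ^ 2 * ℓ) ^ (k + 1) / ((k + 1).factorial : ℝ) ^ 2) := by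
  set d := s * ℓ / (k + 1 : ℕ)
  have hd : 0 < d := by positivity
  have hkd : k * d < volume.real E := by
    refine lt_of_lt_of_le ?_ hsE
    rw [mul_div_assoc', div_lt_iff₀ (by positivity), mul_comm]
    gcongr
    exact k.lt_succ_self
  obtain ⟨y, hyE, hy⟩ := exists_separated_nodes hE hd.le hkd
  have hyJ : ∀ i ≤ k, y i ∈ Icc a (a + ℓ) := fun i hi ↦ hEJ (hyE i hi)
  have hxy : ∀ i ≤ k, |x - y i| ≤ ℓ := fun i hi ↦ by
    simpa using abs_sub_le_of_le_of_le hx.1 hx.2 (hyJ i hi).1 (hyJ i hi).2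
  obtain ⟨ξ, hξ, hrem⟩ := exists_eval_sub_eval_interpolate_eq (s := Finset.range (k + 1))
    (injective_of_monotone_sub_mul hd hy).injOn (I := Icc a (a + ℓ))
    (fun i hi ↦ hyJ i (Finset.mem_range_succ_iff.1 hi)) P hx
  have interpolant_le := abs_eval_interpolate_le hd hy hxy fun i hi ↦ hτ _ (hyE i hi)
  have hℓd : ℓ / d = (k + 1 : ℕ) / s := by simp only [d]; field_simp
  have remainder_le : |P.eval x -
      (Lagrange.interpolate (Finset.range (k + 1)) y fun i ↦ P.eval (y i)).eval x| ≤
      M * ((2 * (N : ℝ) ^ 2 * ℓ) ^ (k + 1) / ((k + 1).factorial : ℝ) ^ 2) := by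
    rw [hrem, Finset.card_range, abs_mul, abs_div, Nat.abs_cast, Finset.abs_prod]
    calc |(Polynomial.derivative^[k + 1] P).eval ξ| / ((k + 1).factorial : ℝ) *
          ∏ i ∈ Finset.range (k + 1), |x - y i|
        ≤ M * ((2 * (N : ℝ) ^ 2) ^ (k + 1) / (k + 1).factorial) / (k + 1).factorial *
            ∏ _i ∈ Finset.range (k + 1), ℓ := by
          gcongr with i hi
          · exact abs_eval_iterate_derivative_le hM hdeg hP (k + 1) (hJ hξ)
          · exact hxy i (Finset.mem_range_succ_iff.1 hi)
      _ = M * ((2 * (N : ℝ) ^ 2 * ℓ) ^ (k + 1) / ((k + 1).factorial : ℝ) ^ 2) := by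
          rw [Finset.prod_const, Finset.card_range, mul_pow _ ℓ]
          ring
  rw [hℓd] at interpolant_le
  have := abs_add_le (P.eval x - _) _ |>.trans (add_le_add remainder_le interpolant_le)
  rwa [sub_add_cancel, add_comm] at this

theorem pow_div_factorial_le_exp_mul {Λ : ℝ} (hΛ : 2 ≤ Λ) (k : ℕ) :
    (2 * ((k + 1 : ℕ) / Real.exp (-Λ))) ^ k / k.factorial ≤ Real.exp (1 + 2 * Λ * k) := by
  have two_le : (2 : ℝ) ≤ Real.exp 1 := by linarith [Real.add_one_le_exp 1]
  calc (2 * ((k + 1 : ℕ) / Real.exp (-Λ))) ^ k / k.factorial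
      = (2 * Real.exp Λ) ^ k * (((k + 1 : ℕ) : ℝ) ^ k / k.factorial) := by
        rw [Real.exp_neg, div_inv_eq_mul, mul_left_comm, mul_pow]
        ring
    _ ≤ (Real.exp 1 * Real.exp Λ) ^ k * Real.exp (k + 1 : ℕ) := by
        gcongr
        exact Real.pow_div_factorial_le_exp _ (by positivity) k
    _ = Real.exp (1 + (2 + Λ) * k) := by
        rw [← Real.exp_add, ← Real.exp_nat_mul, ← Real.exp_add]
        push_cast
        ring_nf
    _ ≤ Real.exp (1 + 2 * Λ * k) := by
        gcongr
        linarith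

theorem pow_div_factorial_sq_le_exp_neg {ε ℓ ρ : ℝ} (hε : 0 < ε) (hℓ₀ : 0 ≤ ℓ)
    (hℓ : ℓ ≤ ε ^ 2 * Real.exp (-3 - ρ)) {N K : ℕ} (hK : ε * N ≤ K) :
    (2 * (N : ℝ) ^ 2 * ℓ) ^ K / (K.factorial : ℝ) ^ 2 ≤ Real.exp (-(ρ * K)) := by
  have pow_div_le : (N : ℝ) ^ K / K.factorial ≤ (Real.exp 1 / ε) ^ K := by
    calc (N : ℝ) ^ K / K.factorial ≤ (K / ε) ^ K / K.factorial := by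
          gcongr
          rwa [le_div_iff₀ hε, mul_comm]
      _ = (K : ℝ) ^ K / K.factorial / ε ^ K := by rw [div_pow]; ring
      _ ≤ Real.exp K / ε ^ K := by
          gcongr
          exact Real.pow_div_factorial_le_exp _ K.cast_nonneg K
      _ = (Real.exp 1 / ε) ^ K := by rw [div_pow, Real.exp_one_pow]
  have base_le : 2 * ℓ * (Real.exp 1 / ε) ^ 2 ≤ Real.exp (-ρ) := by
    calc 2 * ℓ * (Real.exp 1 / ε) ^ 2
        ≤ Real.exp 1 * (ε ^ 2 * Real.exp (-3 - ρ)) * (Real.exp 1 / ε) ^ 2 := by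
          gcongr
          linarith [Real.add_one_le_exp 1]
      _ = Real.exp 1 * Real.exp (-3 - ρ) * (Real.exp 1 * Real.exp 1) := by field_simp
      _ = Real.exp (-ρ) := by simp only [← Real.exp_add]; ring_nf
  calc (2 * (N : ℝ) ^ 2 * ℓ) ^ K / (K.factorial : ℝ) ^ 2
      = (2 * ℓ) ^ K * ((N : ℝ) ^ K / K.factorial) ^ 2 := by
        rw [mul_right_comm, mul_pow, ← pow_mul, mul_comm 2 K, pow_mul]
        ring
    _ ≤ (2 * ℓ) ^ K * ((Real.exp 1 / ε) ^ K) ^ 2 := by gcongr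
    _ = (2 * ℓ * (Real.exp 1 / ε) ^ 2) ^ K := by ring
    _ ≤ Real.exp (-ρ) ^ K := by gcongr
    _ = Real.exp (-(ρ * K)) := by rw [← Real.exp_nat_mul]; ring_nf

/- With `k ≈ ε N` nodes the interpolant grows like `exp (2 * Λ * k)`, while on an interval shorter
than `ε ^ 2` the remainder is geometrically small in `k`. -/
theorem abs_eval_le_exp_of_exp_mul_le_volume {P : Polynomial ℝ} {N : ℕ} {M : ℝ} (hM : 0 < M)
    (hdeg : P.natDegree ≤ N) (hP : ∀ x ∈ Icc (-1 : ℝ) 1, |P.eval x| ≤ M) {a ℓ : ℝ} (hℓ : 0 < ℓ)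
    (hJ : Icc a (a + ℓ) ⊆ Icc (-1) 1) {E : Set ℝ} (hE : IsCompact E) (hEJ : E ⊆ Icc a (a + ℓ))
    {Λ : ℝ} (hΛ : 2 ≤ Λ) (hΛE : Real.exp (-Λ) * ℓ ≤ volume.real E) {τ : ℝ}
    (hτ : ∀ x ∈ E, |P.eval x| ≤ τ) {ε ρ : ℝ} (hε : 0 < ε) (hρ : 0 ≤ ρ)
    (hℓε : ℓ ≤ ε ^ 2 * Real.exp (-3 - ρ)) {x : ℝ} (hx : x ∈ Icc a (a + ℓ)) :
    |P.eval x| ≤ τ * Real.exp (1 + 2 * Λ * (ε * N)) + M * Real.exp (-(ρ * (ε * N))) := by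
  obtain ⟨y, hy⟩ : E.Nonempty :=
    nonempty_of_measureReal_ne_zero (lt_of_lt_of_le (by positivity) hΛE).ne'
  have hτ₀ : 0 ≤ τ := (abs_nonneg _).trans (hτ y hy)
  have floor_le : (⌊ε * N⌋₊ : ℝ) ≤ ε * N := Nat.floor_le (by positivity)
  have le_succ : ε * N ≤ (⌊ε * N⌋₊ + 1 : ℕ) := by exact_mod_cast (Nat.lt_floor_add_one _).le
  refine (abs_eval_le_of_mul_le_volume hM hdeg hP hℓ hJ hE hEJ (Real.exp_pos _) hΛE hτ
    ⌊ε * N⌋₊ hx).trans ?_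
  gcongr
  · exact (pow_div_factorial_le_exp_mul hΛ _).trans (by gcongr)
  · exact (pow_div_factorial_sq_le_exp_neg hε hℓ.le hℓε le_succ).trans (by gcongr)

end LocalRemez

section Sublevel

/-- The sublevel set of `|f|` on `[-1, 1]`, whose Lebesgue measure is `mf f t`. -/
def sublevel (f : ℝ → ℝ) (t : ℝ) : Set ℝ := {x | x ∈ Icc (-1 : ℝ) 1 ∧ |f x| ≤ t}

variable {f : ℝ → ℝ}

theorem mf_eq_volume_sublevel (f : ℝ → ℝ) (t : ℝ) : mf f t = volume.real (sublevel f t) := rfl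

theorem sublevel_subset (f : ℝ → ℝ) (t : ℝ) : sublevel f t ⊆ Icc (-1) 1 := fun _ hx ↦ hx.1

theorem sublevel_mono (f : ℝ → ℝ) : Monotone (sublevel f) := fun _ _ h _ hx ↦ ⟨hx.1, hx.2.trans h⟩

theorem isCompact_sublevel (hf : ContinuousOn f (Icc (-1) 1)) (t : ℝ) :
    IsCompact (sublevel f t) :=
  isCompact_Icc.of_isClosed_subset
    (hf.abs.preimage_isClosed_of_isClosed isClosed_Icc isClosed_Iic) (sublevel_subset f t)

theorem volume_sublevel_lt_top (f : ℝ → ℝ) (t : ℝ) : volume (sublevel f t) < ⊤ :=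
  (measure_mono (sublevel_subset f t)).trans_lt isCompact_Icc.measure_lt_top

theorem mf_nonneg (f : ℝ → ℝ) (t : ℝ) : 0 ≤ mf f t := ENNReal.toReal_nonneg

theorem mf_mono (f : ℝ → ℝ) : Monotone (mf f) := fun _ t h ↦
  measureReal_mono (sublevel_mono f h) (volume_sublevel_lt_top f t).ne

theorem mf_tendsto_nhdsGT (hf : ContinuousOn f (Icc (-1) 1)) (t : ℝ) :
    Tendsto (mf f) (𝓝[>] t) (𝓝 (mf f t)) := by
  have inter_eq : ⋂ r > t, sublevel f r = sublevel f t := by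
    refine Subset.antisymm (fun x hx ↦ ?_) (subset_iInter₂ fun r hr ↦ sublevel_mono f hr.le)
    simp only [mem_iInter] at hx
    exact ⟨(hx (t + 1) (lt_add_one t)).1, le_of_forall_gt_imp_ge_of_dense fun r hr ↦ (hx r hr).2⟩
  have h := tendsto_measure_biInter_gt (μ := volume) (s := sublevel f) (a := t)
    (fun r _ ↦ (isCompact_sublevel hf r).measurableSet.nullMeasurableSet)
    (fun _ _ _ h ↦ sublevel_mono f h) ⟨t + 1, lt_add_one t, (volume_sublevel_lt_top f _).ne⟩
  rw [inter_eq] at h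
  exact (ENNReal.tendsto_toReal (volume_sublevel_lt_top f t).ne).comp h

theorem exists_polynomial_of_En_lt (hf : ContinuousOn f (Icc (-1) 1)) {N : ℕ} {δ : ℝ}
    (h : En f N < δ) :
    ∃ P : Polynomial ℝ, P.natDegree ≤ N ∧ ∀ x ∈ Icc (-1 : ℝ) 1, |f x - P.eval x| ≤ δ := by
  obtain ⟨_, ⟨P, hPN, rfl⟩, hP⟩ := exists_lt_of_csInf_lt (Set.Nonempty.image _ ⟨0, by simp⟩) h
  have hbdd : BddAbove ((fun x ↦ |f x - P.eval x|) '' Icc (-1 : ℝ) 1) :=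
    (isCompact_Icc.image_of_continuousOn (hf.sub P.continuous.continuousOn).abs).bddAbove
  exact ⟨P, hPN, fun x hx ↦ (le_csSup hbdd (mem_image_of_mem _ hx)).trans hP.le⟩

theorem abs_le_mul_exp_of_le_volume_sublevel (hf : ContinuousOn f (Icc (-1) 1)) {B : ℝ}
    (hB : ∀ x ∈ Icc (-1 : ℝ) 1, |f x| ≤ B) {b : ℝ} (hb : 0 < b) {N : ℕ}
    (hN : En f N ≤ Real.exp (-b * N)) {t : ℝ} (ht : t ≤ Real.exp (-b * N)) {Λ δ : ℝ} (hΛ : 2 ≤ Λ)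
    (hδ₀ : 0 ≤ δ) (hδ₁ : δ ≤ 1) {a ℓ : ℝ} (hℓ : 0 < ℓ) (hJ : Icc a (a + ℓ) ⊆ Icc (-1) 1)
    (hℓΛ : ℓ ≤ (b / (4 * Λ)) ^ 2 * Real.exp (-3 - δ * Λ))
    (hvol : Real.exp (-Λ) * ℓ ≤ volume.real (sublevel f t ∩ Icc a (a + ℓ)))
    {x : ℝ} (hx : x ∈ Icc a (a + ℓ)) :
    |f x| ≤ (B + 13) * Real.exp (-(b * δ / 4) * N) := by
  set η := Real.exp (-b * N) with hη
  have η_pos : 0 < η := Real.exp_pos _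
  have η_le_one : η ≤ 1 := Real.exp_le_one_iff.2 (by rw [neg_mul, neg_nonpos]; positivity)
  obtain ⟨P, hPN, hP⟩ := exists_polynomial_of_En_lt hf (δ := 2 * η) (by linarith)
  have abs_P_le : ∀ {y}, y ∈ Icc (-1 : ℝ) 1 → |P.eval y| ≤ |f y| + 2 * η := fun {y} hy ↦ by
    have := abs_sub_abs_le_abs_sub (P.eval y) (f y)
    rw [abs_sub_comm] at this
    linarith [hP y hy]
  have hB₀ : 0 ≤ B := (abs_nonneg _).trans (hB x (hJ hx))
  have key := abs_eval_le_exp_of_exp_mul_le_volume (M := B + 2) (τ := 3 * η) (ρ := δ * Λ)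
    (by positivity) hPN (fun y hy ↦ by linarith [abs_P_le hy, hB y hy]) hℓ hJ
    ((isCompact_sublevel hf t).inter_right isClosed_Icc) inter_subset_right hΛ hvol
    (fun y hy ↦ by linarith [abs_P_le hy.1.1, hy.1.2]) (by positivity) (by positivity) hℓΛ hx
  have exponent₁ : 2 * Λ * (b / (4 * Λ) * N) = b / 2 * N := by field_simp; norm_num
  have exponent₂ : δ * Λ * (b / (4 * Λ) * N) = b * δ / 4 * N := by field_simp
  rw [exponent₁, exponent₂, ← neg_mul] at key
  have sublevel_term_le : 3 * η * Real.exp (1 + b / 2 * N) ≤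
      9 * Real.exp (-(b * δ / 4) * N) := by
    calc 3 * η * Real.exp (1 + b / 2 * N) = 3 * Real.exp 1 * Real.exp (-(b / 2) * N) := by
          rw [hη, mul_assoc, mul_assoc, ← Real.exp_add, ← Real.exp_add]
          ring_nf
      _ ≤ 9 * Real.exp (-(b * δ / 4) * N) := by
          gcongr ?_ * Real.exp (-?_ * _)
          · linarith [Real.exp_one_lt_d9]
          · nlinarith
  have η_le : η ≤ Real.exp (-(b * δ / 4) * N) := by
    rw [hη]
    gcongr
    nlinarith
  have := abs_sub_abs_le_abs_sub (f x) (P.eval x)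
  linarith [hP x (hJ hx)]

end Sublevel

section Density

variable {E Z : Set ℝ} {a ℓ : ℝ}

theorem volume_inter_Icc_ne_top (E : Set ℝ) (u v : ℝ) : volume (E ∩ Icc u v) ≠ ⊤ :=
  measure_inter_ne_top_of_right_ne_top isCompact_Icc.measure_lt_top.ne

theorem exists_le_volume_inter_Icc {δ : ℝ} (hℓ : 0 ≤ ℓ) (q : ℕ)
    (h : (q + 1) * δ ≤ volume.real (E ∩ Icc a (a + (q + 1) * ℓ))) :
    ∃ c, Icc c (c + ℓ) ⊆ Icc a (a + (q + 1) * ℓ) ∧ δ ≤ volume.real (E ∩ Icc c (c + ℓ)) := by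
  induction q generalizing a with
  | zero => exact ⟨a, by simp, by simpa using h⟩
  | succ q ih =>
    have hsplit : a + ((q + 1 : ℕ) + 1) * ℓ = a + ℓ + (q + 1) * ℓ := by push_cast; ring
    have hℓ' : a + ℓ ≤ a + ℓ + (q + 1) * ℓ := le_add_of_nonneg_right (by positivity)
    rw [hsplit] at h ⊢
    by_cases hfirst : δ ≤ volume.real (E ∩ Icc a (a + ℓ))
    · exact ⟨a, Icc_subset_Icc_right hℓ', hfirst⟩
    have union_le : volume.real (E ∩ Icc a (a + ℓ + (q + 1) * ℓ)) ≤
        volume.real (E ∩ Icc a (a + ℓ)) +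
          volume.real (E ∩ Icc (a + ℓ) (a + ℓ + (q + 1) * ℓ)) := by
      rw [← Icc_union_Icc_eq_Icc (le_add_of_nonneg_right hℓ) hℓ', inter_union_distrib_left]
      exact measureReal_union_le _ _
    push_cast at h
    obtain ⟨c, hc, hδ⟩ := ih (a := a + ℓ) (by linarith)
    exact ⟨c, hc.trans (Icc_subset_Icc_left (le_add_of_nonneg_right hℓ)), hδ⟩

theorem lipschitzWith_volume_inter_Icc (Z : Set ℝ) (ℓ : ℝ) :
    LipschitzWith 1 fun a ↦ volume.real (Z ∩ Icc a (a + ℓ)) := by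
  refine LipschitzWith.of_le_add fun a c ↦ ?_
  have hcover : Z ∩ Icc a (a + ℓ) ⊆ Z ∩ Icc c (c + ℓ) ∪ (Icc a c ∪ Icc (c + ℓ) (a + ℓ)) := by
    rintro x ⟨hxZ, hax, hxa⟩
    rcases le_total x c with hxc | hcx
    · exact .inr (.inl ⟨hax, hxc⟩)
    · exact (le_total x (c + ℓ)).imp (⟨hxZ, hcx, ·⟩) (.inr ⟨·, hxa⟩)
  calc volume.real (Z ∩ Icc a (a + ℓ))
      ≤ volume.real (Z ∩ Icc c (c + ℓ) ∪ (Icc a c ∪ Icc (c + ℓ) (a + ℓ))) :=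
        measureReal_mono hcover <| measure_union_ne_top (volume_inter_Icc_ne_top Z _ _)
          (isCompact_Icc.union isCompact_Icc).measure_lt_top.ne
    _ ≤ volume.real (Z ∩ Icc c (c + ℓ)) +
          (volume.real (Icc a c) + volume.real (Icc (c + ℓ) (a + ℓ))) :=
        (measureReal_union_le _ _).trans (by gcongr; exact measureReal_union_le _ _)
    _ = volume.real (Z ∩ Icc c (c + ℓ)) + dist a c := by
        rw [Real.volume_real_Icc, Real.volume_real_Icc, add_sub_add_right_eq_sub, Real.dist_eq]
        rcases le_total a c with hac | hca
        · rw [max_eq_left (sub_nonneg.2 hac), max_eq_right (sub_nonpos.2 hac), abs_sub_comm,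
            abs_of_nonneg (sub_nonneg.2 hac), add_zero]
        · rw [max_eq_right (sub_nonpos.2 hca), max_eq_left (sub_nonneg.2 hca),
            abs_of_nonneg (sub_nonneg.2 hca), zero_add]

/- The hypothesis keeps the continuous function `a ↦ volume.real (Z ∩ Icc a (a + ℓ))` off `[δ, ℓ)`,
so by the intermediate value theorem it is `ℓ` everywhere as soon as it is at one place. -/
theorem Icc_subset_of_le_volume_inter {u v δ : ℝ} (hℓ : 0 < ℓ) (hδ : δ < ℓ)
    (hZ : ∀ c, Icc c (c + ℓ) ⊆ Icc u v → δ ≤ volume.real (Z ∩ Icc c (c + ℓ)) →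
      Icc c (c + ℓ) ⊆ Z)
    (ha : Icc a (a + ℓ) ⊆ Icc u v) (haδ : δ ≤ volume.real (Z ∩ Icc a (a + ℓ))) :
    Icc u v ⊆ Z := by
  set g := fun c ↦ volume.real (Z ∩ Icc c (c + ℓ)) with hg
  have Icc_subset_iff : ∀ {c}, Icc c (c + ℓ) ⊆ Icc u v ↔ c ∈ Icc u (v - ℓ) := fun {c} ↦ by
    rw [Icc_subset_Icc_iff (le_add_of_nonneg_right hℓ.le), mem_Icc, le_sub_iff_add_le]
  have eq_length : ∀ {c}, c ∈ Icc u (v - ℓ) → δ ≤ g c → g c = ℓ := fun {c} hc hδc ↦ by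
    simp only [hg]
    rw [inter_eq_right.2 (hZ c (Icc_subset_iff.2 hc) hδc), Real.volume_real_Icc,
      add_sub_cancel_left, max_eq_left hℓ.le]
  have ha := Icc_subset_iff.1 ha
  have le_everywhere : ∀ c ∈ Icc u (v - ℓ), δ ≤ g c := by
    by_contra! ⟨c, hc, hcδ⟩
    obtain ⟨w, hw, hgw⟩ : (δ + ℓ) / 2 ∈ g '' Icc u (v - ℓ) :=
      isPreconnected_Icc.intermediate_value hc ha
        (lipschitzWith_volume_inter_Icc Z ℓ).continuous.continuousOn
        ⟨by linarith, by linarith [eq_length ha haδ]⟩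
    linarith [eq_length hw (by linarith)]
  intro x hx
  have hc : min x (v - ℓ) ∈ Icc u (v - ℓ) :=
    ⟨le_min hx.1 (ha.1.trans ha.2), min_le_right _ _⟩
  refine hZ _ (Icc_subset_iff.2 hc) (le_everywhere _ hc) ⟨min_le_left _ _, ?_⟩
  rw [← min_add_add_right, sub_add_cancel]
  exact le_min (le_add_of_nonneg_right hℓ.le) hx.2

end Density

section LevelSets

variable {f : ℝ → ℝ}

theorem exists_Icc_half_mf_mul_le_volume (f : ℝ → ℝ) (t : ℝ) {m : ℝ} (hm₀ : 0 < m) (hm₁ : m ≤ 1) :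
    ∃ a ℓ, 2 * m ≤ ℓ ∧ ℓ ≤ 4 * m ∧ Icc a (a + ℓ) ⊆ Icc (-1) 1 ∧
      mf f t / 2 * ℓ ≤ volume.real (sublevel f t ∩ Icc a (a + ℓ)) := by
  obtain ⟨q, hq⟩ := Nat.exists_eq_add_one.2 (Nat.floor_pos.2 ((one_le_inv₀ hm₀).2 hm₁))
  have floor_le : ((q : ℝ) + 1) * m ≤ 1 := by
    rw [← le_div_iff₀ hm₀, one_div]
    exact_mod_cast hq ▸ Nat.floor_le (inv_nonneg.2 hm₀.le)
  have lt_succ : 1 < ((q : ℝ) + 1 + 1) * m := by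
    rw [← div_lt_iff₀ hm₀, one_div]
    exact_mod_cast hq ▸ Nat.lt_floor_add_one m⁻¹
  have hsum : -1 + ((q : ℝ) + 1) * (2 / (q + 1)) = 1 := by field_simp; norm_num
  obtain ⟨a, ha, hvol⟩ := exists_le_volume_inter_Icc (E := sublevel f t) (a := -1)
    (ℓ := 2 / (q + 1)) (δ := mf f t / (q + 1)) (by positivity) q (by
      rw [hsum, inter_eq_left.2 (sublevel_subset f t), mul_div_cancel₀ _ (by positivity),
        mf_eq_volume_sublevel])
  rw [hsum] at ha
  refine ⟨a, 2 / (q + 1), ?_, ?_, ha, le_of_eq_of_le (by field_simp) hvol⟩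
  · rw [le_div_iff₀ (by positivity)]
    linarith
  · rw [div_le_iff₀ (by positivity)]
    nlinarith

theorem exists_forall_abs_le (hf : ContinuousOn f (Icc (-1) 1)) :
    ∃ B, 0 ≤ B ∧ ∀ x ∈ Icc (-1 : ℝ) 1, |f x| ≤ B := by
  obtain ⟨B, hB⟩ := isCompact_Icc.exists_bound_of_continuousOn hf
  exact ⟨B, (norm_nonneg _).trans (hB 1 (by simp)), hB⟩

theorem tendsto_exp_neg_mul_natCast {c : ℝ} (hc : 0 < c) :
    Tendsto (fun N : ℕ ↦ Real.exp (-c * N)) atTop (𝓝 0) :=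
  Real.tendsto_exp_atBot.comp
    (tendsto_natCast_atTop_atTop.const_mul_atTop_of_neg (neg_neg_of_pos hc))

theorem Icc_subset_sublevel_zero (hf : ContinuousOn f (Icc (-1) 1)) {b : ℝ} (hb : 0 < b)
    (hEn : ∃ᶠ N : ℕ in atTop, En f N ≤ Real.exp (-b * N)) {Λ : ℝ} (hΛ : 2 ≤ Λ) {a ℓ : ℝ}
    (hℓ : 0 < ℓ) (hℓΛ : ℓ ≤ (b / (4 * Λ)) ^ 2 * Real.exp (-3 - Λ))
    (hJ : Icc a (a + ℓ) ⊆ Icc (-1) 1)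
    (hvol : Real.exp (-Λ) * ℓ ≤ volume.real (sublevel f 0 ∩ Icc a (a + ℓ))) :
    Icc a (a + ℓ) ⊆ sublevel f 0 := by
  intro x hx
  obtain ⟨B, -, hB⟩ := exists_forall_abs_le hf
  have hlim : Tendsto (fun N : ℕ ↦ (B + 13) * Real.exp (-(b * 1 / 4) * N)) atTop (𝓝 0) := by
    simpa using (tendsto_exp_neg_mul_natCast (c := b * 1 / 4) (by positivity)).const_mul (B + 13)
  refine ⟨hJ hx, ge_of_tendsto_of_frequently hlim (hEn.mono fun N hN ↦ ?_)⟩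
  exact abs_le_mul_exp_of_le_volume_sublevel hf hB hb hN (Real.exp_pos _).le hΛ zero_le_one le_rfl
    hℓ hJ (by rwa [one_mul]) hvol hx

theorem mf_zero_eq_zero (hf : ContinuousOn f (Icc (-1) 1)) (hf₀ : ∃ x ∈ Icc (-1 : ℝ) 1, f x ≠ 0)
    {b : ℝ} (hb : 0 < b) (hEn : ∃ᶠ N : ℕ in atTop, En f N ≤ Real.exp (-b * N)) : mf f 0 = 0 := by
  by_contra hne
  have hpos : 0 < mf f 0 := (mf_nonneg f 0).lt_of_ne' hne
  set Λ := max 2 (-Real.log (mf f 0 / 2))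
  have hΛ : 2 ≤ Λ := le_max_left _ _
  have exp_neg_le : Real.exp (-Λ) ≤ mf f 0 / 2 := by
    rw [← Real.le_log_iff_exp_le (by positivity), neg_le]
    exact le_max_right _ _
  set ℓ₀ := (b / (4 * Λ)) ^ 2 * Real.exp (-3 - Λ)
  have : 0 < ℓ₀ := by positivity
  obtain ⟨a, ℓ, hmℓ, hℓm, hJ, hvol⟩ := exists_Icc_half_mf_mul_le_volume f 0
    (m := min (ℓ₀ / 4) 1) (by positivity) (min_le_right _ _)
  have hℓ : 0 < ℓ := lt_of_lt_of_le (by positivity) hmℓ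
  have hℓ₀' : ℓ ≤ ℓ₀ := by linarith [min_le_left (ℓ₀ / 4) 1]
  have hdensity : Real.exp (-Λ) * ℓ < ℓ :=
    mul_lt_of_lt_one_left hℓ (Real.exp_lt_one_iff.2 (by linarith))
  obtain ⟨x, hx, hfx⟩ := hf₀
  have hzero : Icc (-1) 1 ⊆ sublevel f 0 := Icc_subset_of_le_volume_inter hℓ hdensity
    (fun c hc hvol ↦ Icc_subset_sublevel_zero hf hb hEn hΛ hℓ hℓ₀' hc hvol) hJ
    (le_trans (by gcongr) hvol)
  exact hfx (abs_nonpos_iff.1 (hzero hx).2)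

theorem mf_exp_le_exp_neg_mul (hf : ContinuousOn f (Icc (-1) 1)) {B : ℝ}
    (hB : ∀ x ∈ Icc (-1 : ℝ) 1, |f x| ≤ B) {b : ℝ} (hb : 0 < b) {A L : ℝ} (hA : 0 ≤ A)
    (hL : 2 ≤ L)
    (hgrowth : 4 * Real.exp (-L) ≤ (b / (4 * (A + 1)) / L) ^ 2 * Real.exp (-3 - L / 2))
    {N : ℕ} (hN : En f N ≤ Real.exp (-b * N)) {t : ℝ}
    (ht : (B + 13) * Real.exp (-(b / (8 * (A + 1))) * N) ≤ t) (hmf : mf f t ≤ Real.exp (-L)) :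
    mf f (Real.exp (-b * N)) ≤ Real.exp (-(A * L)) := by
  by_contra! hlt
  have hm₁ : Real.exp (-L) ≤ 1 := Real.exp_le_one_iff.2 (by linarith)
  obtain ⟨a, ℓ, hmℓ, hℓm, hJ, hvol⟩ := exists_Icc_half_mf_mul_le_volume f (Real.exp (-b * N))
    (Real.exp_pos _) hm₁
  have hm₀ := Real.exp_pos (-L)
  have hℓ : 0 < ℓ := by linarith
  have hΛ : 2 ≤ (A + 1) * L := by nlinarith
  have half_bound : Real.exp (-L) ≤ 1 / 2 := by
    rw [Real.exp_neg, one_div]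
    exact inv_anti₀ two_pos (by linarith [Real.add_one_le_exp L])
  have hdensity : Real.exp (-((A + 1) * L)) ≤ mf f (Real.exp (-b * N)) / 2 := by
    calc Real.exp (-((A + 1) * L)) = Real.exp (-(A * L)) * Real.exp (-L) := by
          rw [← Real.exp_add]
          ring_nf
      _ ≤ mf f (Real.exp (-b * N)) * (1 / 2) :=
          mul_le_mul hlt.le half_bound hm₀.le (mf_nonneg f _)
      _ = mf f (Real.exp (-b * N)) / 2 := by ring
  have hlength : ℓ ≤ (b / (4 * ((A + 1) * L))) ^ 2 *
      Real.exp (-3 - 1 / (2 * (A + 1)) * ((A + 1) * L)) := by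
    rw [← mul_assoc 4, ← div_div b, show 1 / (2 * (A + 1)) * ((A + 1) * L) = L / 2 by field_simp]
    exact hℓm.trans hgrowth
  have hrate : b * (1 / (2 * (A + 1))) / 4 = b / (8 * (A + 1)) := by field_simp; norm_num
  have hsub : Icc a (a + ℓ) ⊆ sublevel f t := fun x hx ↦ by
    refine ⟨hJ hx, le_trans ?_ ht⟩
    rw [← hrate]
    exact abs_le_mul_exp_of_le_volume_sublevel hf hB hb hN le_rfl hΛ (by positivity)
      (div_le_one_of_le₀ (by linarith) (by positivity)) hℓ hJ hlength
      (le_trans (by gcongr) hvol) hx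
  have hle := measureReal_mono hsub (volume_sublevel_lt_top f t).ne
  rw [Real.volume_real_Icc, add_sub_cancel_left, max_eq_left hℓ.le, ← mf_eq_volume_sublevel] at hle
  linarith

theorem eventually_mul_exp_neg_le {c : ℝ} (hc : 0 < c) :
    ∀ᶠ L in atTop, 4 * Real.exp (-L) ≤ (c / L) ^ 2 * Real.exp (-3 - L / 2) := by
  have hhalf : Tendsto (fun L : ℝ ↦ L / 2) atTop atTop := tendsto_id.atTop_div_const two_pos
  filter_upwards [((Real.tendsto_exp_div_pow_atTop 2).comp hhalf).eventually_ge_atTop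
    (16 * Real.exp 3 / c ^ 2), eventually_gt_atTop 0] with L hL hL₀
  rw [Function.comp_apply, div_le_div_iff₀ (by positivity) (by positivity)] at hL
  have hsplit : Real.exp (-L) = Real.exp 3 * Real.exp (-3 - L / 2) / Real.exp (L / 2) := by
    rw [← Real.exp_add, ← Real.exp_sub]
    ring_nf
  rw [hsplit, div_pow, mul_div_assoc', div_mul_eq_mul_div,
    div_le_div_iff₀ (Real.exp_pos _) (by positivity)]
  nlinarith [Real.exp_pos (-3 - L / 2)]

theorem mul_exp_neg_mul_le {C c k N : ℝ} (hC : 1 ≤ C) (hc : 0 < c) (hk : 1 ≤ k)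
    (hN : (Real.log C + 1) / c * k ≤ N) : C * Real.exp (-c * N) ≤ Real.exp (-k) := by
  rw [div_mul_eq_mul_div, div_le_iff₀ hc] at hN
  calc C * Real.exp (-c * N) = Real.exp (Real.log C + -c * N) := by
        rw [Real.exp_add, Real.exp_log (one_pos.trans_le hC)]
    _ ≤ Real.exp (-k) := by
        gcongr
        nlinarith [Real.log_nonneg hC]

theorem exists_eventually_mf_exp_le (hf : ContinuousOn f (Icc (-1) 1)) {b : ℝ} (hb : 0 < b) {A : ℝ}
    (hA : 0 ≤ A) :
    ∃ R : ℝ, ∀ᶠ L in atTop, ∀ k N : ℕ, 0 < k → R ≤ N / k → En f N ≤ Real.exp (-b * N) →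
      mf f (Real.exp (-k)) ≤ Real.exp (-L) →
      mf f (Real.exp (-b * N)) ≤ Real.exp (-(A * L)) := by
  obtain ⟨B, hB₀, hB⟩ := exists_forall_abs_le hf
  refine ⟨(Real.log (B + 13) + 1) / (b / (8 * (A + 1))), ?_⟩
  filter_upwards [eventually_mul_exp_neg_le (c := b / (4 * (A + 1))) (by positivity),
    eventually_ge_atTop 2] with L hgrowth hL k N hk hkN hN hmf
  rw [le_div_iff₀ (Nat.cast_pos.2 hk)] at hkN
  exact mf_exp_le_exp_neg_mul hf hB hb hA hL hgrowth hN
    (mul_exp_neg_mul_le (by linarith) (by positivity) (Nat.one_le_cast.2 hk) hkN) hmf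

theorem tendsto_mf_exp_neg_mul (hf : ContinuousOn f (Icc (-1) 1))
    (hf₀ : ∃ x ∈ Icc (-1 : ℝ) 1, f x ≠ 0) {b : ℝ} (hb : 0 < b)
    (hEn : ∃ᶠ N : ℕ in atTop, En f N ≤ Real.exp (-b * N)) :
    Tendsto (fun N : ℕ ↦ mf f (Real.exp (-b * N))) atTop (𝓝 0) := by
  rw [← mf_zero_eq_zero hf hf₀ hb hEn]
  exact (mf_tendsto_nhdsGT hf 0).comp <| tendsto_nhdsWithin_iff.2
    ⟨tendsto_exp_neg_mul_natCast hb, .of_forall fun _ ↦ Real.exp_pos _⟩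

theorem Estar_le_exp {b : ℝ} (hb : b ≤ 1) {N : ℕ} (hN : En f N ≤ Real.exp (-b * N)) :
    Estar f N ≤ Real.exp (-b * N) :=
  max_le hN (Real.exp_le_exp.2 (by nlinarith [N.cast_nonneg (α := ℝ)]))

theorem tendsto_mf_Estar (hf : ContinuousOn f (Icc (-1) 1)) (hf₀ : ∃ x ∈ Icc (-1 : ℝ) 1, f x ≠ 0)
    {b : ℝ} (hb₀ : 0 < b) (hb₁ : b ≤ 1) {n : ℕ → ℕ} (hn : Tendsto n atTop atTop)
    (hEn : ∀ j, En f (n j) ≤ Real.exp (-b * n j)) :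
    Tendsto (fun j ↦ mf f (Estar f (n j))) atTop (𝓝 0) :=
  squeeze_zero (fun _ ↦ mf_nonneg f _) (fun j ↦ mf_mono f (Estar_le_exp hb₁ (hEn j))) <|
    (tendsto_mf_exp_neg_mul hf hf₀ hb₀ (hn.frequently (.of_forall hEn))).comp hn

theorem exp_neg_le_Estar (f : ℝ → ℝ) (N : ℕ) : Real.exp (-N) ≤ Estar f N := le_max_right _ _

end LevelSets

theorem bernstein_level_sets
    (f : ℝ → ℝ) (hf : ContinuousOn f (Set.Icc (-1:ℝ) 1))
    (hf0 : ∃ x ∈ Set.Icc (-1:ℝ) 1, f x ≠ 0)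
    (β : ℝ) (hβ : 0 < β)
    (n : ℕ → ℕ) (hmono : StrictMono n) (hpos : ∀ j, 0 < n j)
    (hlac : Tendsto (fun j => (n (j+1) : ℝ) / (n j : ℝ)) atTop atTop)
    (happrox : ∀ j, En f (n j) ≤ Real.exp (-β * (n j : ℝ)))
    (hm : ∀ j, 0 < mf f (Estar f (n j)) ∧ mf f (Estar f (n j)) < 1) :
    Tendsto (fun j => |Real.log (mf f (Estar f (n (j+1))))| /
      |Real.log (mf f (Estar f (n j)))|) atTop atTop := by
  obtain ⟨b, hb, hbβ, hb₁⟩ : ∃ b, 0 < b ∧ b ≤ β ∧ b ≤ 1 :=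
    ⟨min β 1, by positivity, min_le_left _ _, min_le_right _ _⟩
  have hEn j : En f (n j) ≤ Real.exp (-b * n j) := (happrox j).trans (by gcongr)
  have hlog : Tendsto (fun j ↦ -Real.log (mf f (Estar f (n j)))) atTop atTop :=
    tendsto_neg_atBot_atTop.comp <| Real.tendsto_log_nhdsGT_zero.comp <|
      tendsto_nhdsWithin_iff.2 ⟨tendsto_mf_Estar hf hf0 hb hb₁ hmono.tendsto_atTop hEn,
        .of_forall fun j ↦ (hm j).1⟩
  have hlog_neg j := Real.log_neg (hm j).1 (hm j).2
  simp only [fun j ↦ abs_of_neg (hlog_neg j)]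
  refine (atTop_basis' 0).tendsto_right_iff.2 fun A hA ↦ ?_
  obtain ⟨R, hR⟩ := exists_eventually_mf_exp_le hf hb hA
  filter_upwards [hlog.eventually hR, hlac.eventually_ge_atTop R] with j hstep hnR
  rw [neg_neg, Real.exp_log (hm j).1] at hstep
  have hle := hstep (n j) (n (j + 1)) (hpos j) hnR (hEn (j + 1)) (mf_mono f (exp_neg_le_Estar f _))
  rw [mem_Ici, le_div_iff₀ (neg_pos.2 (hlog_neg j)), le_neg, Real.log_le_iff_le_exp (hm (j + 1)).1]
  exact (mf_mono f (Estar_le_exp hb₁ (hEn (j + 1)))).trans hle
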